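/- For a C² radial function f of ρ, at points where ∇_{H^n}ρ ≠ 0 the Heisenberg Hessian D²_{H^n}f(ρ) has eigenvalues: |∇_{H^n}ρ|²f''(ρ) (simple), 3|∇_{H^n}ρ|²f'(ρ)/ρ (simple), and |∇_{H^n}ρ|²f'(ρ)/ρ with multiplicity 2n−2; at points where ∇_{H^n}ρ = 0 all eigenvalues of D²_{H^n}f(ρ) vanish. -/

import Mathlib

open scoped BigOperators

noncomputable section

/-- Direction vector of the Heisenberg vector field `X_i` at the point `ξ ∈ ℝ^{2n+1}`:
for `i < n`, `X_i = ∂_i + 2 ξ_{i+n} ∂_{2n}`; for `n ≤ i < 2n`, `X_i = ∂_i - 2 ξ_{i-n} ∂_{2n}`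
(indices `0,…,2n`, the last coordinate being index `2n`). -/
def Xvec (n : ℕ) (ξ : Fin (2*n+1) → ℝ) (i : Fin (2*n)) : Fin (2*n+1) → ℝ :=
  fun j =>
    (if (j : ℕ) = (i : ℕ) then 1 else 0) +
    (if (j : ℕ) = 2*n then
        (if h : (i : ℕ) < n then 2 * ξ ⟨(i : ℕ) + n, by omega⟩
         else -2 * ξ ⟨(i : ℕ) - n, by have := i.isLt; omega⟩)
      else 0)

/-- The Heisenberg vector field `X_i` acting on a function. -/
def X (n : ℕ) (i : Fin (2*n)) (f : (Fin (2*n+1) → ℝ) → ℝ)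
    (ξ : Fin (2*n+1) → ℝ) : ℝ :=
  fderiv ℝ f ξ (Xvec n ξ i)

/-- `∑_{i=1}^{2n} ξ_i²`, the squared euclidean norm of the horizontal coordinates. -/
def hsq (n : ℕ) (ξ : Fin (2*n+1) → ℝ) : ℝ :=
  ∑ i : Fin (2*n), (ξ ⟨(i : ℕ), by have := i.isLt; omega⟩)^2

/-- The homogeneous norm `ρ(ξ) = ((∑ ξ_i²)² + ξ_{2n+1}²)^{1/4}`. -/
def rho (n : ℕ) (ξ : Fin (2*n+1) → ℝ) : ℝ :=
  ((hsq n ξ)^2 + (ξ ⟨2*n, by omega⟩)^2) ^ (1/4 : ℝ)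

/-- `|∇_{H^n}ρ(ξ)|²`. -/
def gradSq (n : ℕ) (ξ : Fin (2*n+1) → ℝ) : ℝ :=
  ∑ i : Fin (2*n), (X n i (rho n) ξ)^2

/-- The symmetrized Heisenberg Hessian `D²_{H^n} f = (X_i X_j f)_{sym}`. -/
def HessH (n : ℕ) (f : (Fin (2*n+1) → ℝ) → ℝ) (ξ : Fin (2*n+1) → ℝ) :
    Matrix (Fin (2*n)) (Fin (2*n)) ℝ :=
  Matrix.of fun i j =>
    (X n i (fun η => X n j f η) ξ + X n j (fun η => X n i f η) ξ) / 2

/-!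
Write `x` for the horizontal part of `ξ`, `t` for its last coordinate and `J` for the symplectic
rotation, so that `X_i = ∂_i + 2 (J x)_i ∂_t`. The polynomial `ρ⁴ = |x|⁴ + t²` has horizontal
gradient `4 (|x|² x + t J x)` and horizontal Hessian `4 |x|² I + 8 (x xᵀ + (J x) (J x)ᵀ)`. Put
`p = ∇ρ`. Up to the factor `ρ`, the pair `p, J p` is `x, J x` rotated in its plane, so
`ρ² (p pᵀ + (J p) (J p)ᵀ) = x xᵀ + (J x) (J x)ᵀ`; undoing the fourth power with the chain rule gives
`D²ρ = ρ⁻¹ (|p|² I - p pᵀ + 2 (J p) (J p)ᵀ)`, hence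
`D²f(ρ) = |p|² f'/ρ I + (f'' - f'/ρ) p pᵀ + 2 f'/ρ (J p) (J p)ᵀ`. Since `p` and `J p` are
orthogonal of equal length, the eigenvalues can be read off. They are all multiples of `|p|²`, so
they vanish where `p` does.
-/

open Finset Matrix
open scoped Topology

section Charpoly

variable {R ι κ : Type*} [CommRing R] [Fintype ι] [DecidableEq ι] [Fintype κ] [DecidableEq κ]

lemma charpoly_smul_one_add_mul_of_mul_eq_diagonal (hcard : Fintype.card κ ≤ Fintype.card ι)
    {U : Matrix ι κ R} {V : Matrix κ ι R} {d : κ → R} (hVU : V * U = diagonal d) (c : R) :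
    (c • (1 : Matrix ι ι R) + U * V).charpoly =
      (Polynomial.X - Polynomial.C c) ^ (Fintype.card ι - Fintype.card κ) *
        ∏ k, (Polynomial.X - Polynomial.C (c + d k)) := by
  have hshift : c • (1 : Matrix ι ι R) + U * V = U * V - scalar ι (-c) := by
    rw [map_neg, sub_neg_eq_add, add_comm, scalar_apply, smul_one_eq_diagonal]
  rw [hshift, charpoly_sub_scalar, charpoly_mul_comm_of_le _ _ hcard, hVU, charpoly_diagonal]
  simp [Polynomial.prod_comp, sub_eq_add_neg, add_assoc, add_comm]

lemma roots_charpoly_smul_one_add_mul_of_mul_eq_diagonal [IsDomain R]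
    (hcard : Fintype.card κ ≤ Fintype.card ι)
    {U : Matrix ι κ R} {V : Matrix κ ι R} {d : κ → R} (hVU : V * U = diagonal d) (c : R) :
    (c • (1 : Matrix ι ι R) + U * V).charpoly.roots =
      Multiset.replicate (Fintype.card ι - Fintype.card κ) c + univ.val.map fun k ↦ c + d k := by
  have hsplit : (c • (1 : Matrix ι ι R) + U * V).charpoly =
      ((Multiset.replicate (Fintype.card ι - Fintype.card κ) c + univ.val.map fun k ↦ c + d k).map
        fun r ↦ Polynomial.X - Polynomial.C r).prod := by
    simp [charpoly_smul_one_add_mul_of_mul_eq_diagonal hcard hVU]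
  rw [hsplit, Polynomial.roots_multiset_prod_X_sub_C]

lemma roots_charpoly_smul_one_add_vecMulVec_add_vecMulVec [IsDomain R]
    (hcard : 2 ≤ Fintype.card ι) {p q : ι → R} (hpq : p ⬝ᵥ q = 0) (a b c : R) :
    (c • (1 : Matrix ι ι R) + a • vecMulVec p p + b • vecMulVec q q).charpoly.roots =
      (c + a * (p ⬝ᵥ p)) ::ₘ (c + b * (q ⬝ᵥ q)) ::ₘ
        Multiset.replicate (Fintype.card ι - 2) c := by
  let U : Matrix ι (Fin 2) R := (of ![p, q])ᵀ
  let V : Matrix (Fin 2) ι R := of ![a • p, b • q]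
  have hVU : V * U = diagonal ![a * (p ⬝ᵥ p), b * (q ⬝ᵥ q)] := by
    ext k l
    change ![a • p, b • q] k ⬝ᵥ ![p, q] l = _
    fin_cases k <;> fin_cases l <;> simp [hpq, dotProduct_comm q p]
  have hUV : a • vecMulVec p p + b • vecMulVec q q = U * V := by
    ext i j
    simp [U, V, mul_apply, Fin.sum_univ_two, vecMulVec_apply, mul_left_comm]
  rw [add_assoc, hUV, roots_charpoly_smul_one_add_mul_of_mul_eq_diagonal (by simpa) hVU, add_comm]
  simp [← Multiset.cons_coe]

end Charpoly

lemma vecMulVec_self_add_vecMulVec_self_rotate {R ι : Type*} [CommRing R] (a b : R)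
    (x y : ι → R) :
    vecMulVec (a • x + b • y) (a • x + b • y) + vecMulVec (a • y - b • x) (a • y - b • x) =
      (a ^ 2 + b ^ 2) • (vecMulVec x x + vecMulVec y y) := by
  ext i j
  simp only [Matrix.add_apply, Matrix.smul_apply, vecMulVec_apply, Pi.add_apply,
    Pi.sub_apply, Pi.smul_apply, smul_eq_mul]
  ring

lemma dotProduct_mulVec_self_of_transpose_eq_neg {R ι : Type*} [CommRing R] [IsAddTorsionFree R]
    [Fintype ι] {A : Matrix ι ι R} (hA : Aᵀ = -A) (x : ι → R) : x ⬝ᵥ A *ᵥ x = 0 := by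
  refine self_eq_neg.1 ?_
  conv_lhs => rw [dotProduct_mulVec, ← mulVec_transpose, hA, neg_mulVec, neg_dotProduct,
    dotProduct_comm]

section Symplectic

/-- The numbering of the `2n` horizontal coordinates in which the `k`-th coordinate of the first
half is conjugate to the `k`-th coordinate of the second half. -/
def pairEquiv (n : ℕ) : Fin n ⊕ Fin n ≃ Fin (2 * n) :=
  finSumFinEquiv.trans (finCongr (two_mul n).symm)

/-- The matrix of the symplectic rotation `(x, y) ↦ (y, -x)` of the horizontal coordinates, which
gives the `∂_t`-components of the Heisenberg vector fields. It is the negative of Mathlib's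
`Matrix.J`, carried to `Fin (2 * n)`. -/
def horizJ (n : ℕ) : Matrix (Fin (2 * n)) (Fin (2 * n)) ℝ :=
  (-J (Fin n) ℝ).submatrix (pairEquiv n).symm (pairEquiv n).symm

variable (n : ℕ)

lemma horizJ_transpose : (horizJ n)ᵀ = -horizJ n := by
  simp [horizJ, transpose_submatrix, submatrix_neg]

lemma horizJ_mul_self : horizJ n * horizJ n = -1 := by
  simp [horizJ, submatrix_neg, submatrix_mul_equiv, J_squared]

lemma horizJ_mulVec_horizJ_mulVec (x : Fin (2 * n) → ℝ) : horizJ n *ᵥ horizJ n *ᵥ x = -x := by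
  rw [mulVec_mulVec, horizJ_mul_self, neg_mulVec, one_mulVec]

lemma dotProduct_horizJ_mulVec_self (x : Fin (2 * n) → ℝ) : x ⬝ᵥ horizJ n *ᵥ x = 0 :=
  dotProduct_mulVec_self_of_transpose_eq_neg (horizJ_transpose n) x

lemma horizJ_mulVec_dotProduct_horizJ_mulVec (x y : Fin (2 * n) → ℝ) :
    (horizJ n *ᵥ x) ⬝ᵥ (horizJ n *ᵥ y) = x ⬝ᵥ y := by
  rw [dotProduct_mulVec, ← mulVec_transpose, horizJ_transpose, neg_mulVec,
    horizJ_mulVec_horizJ_mulVec, neg_neg]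

lemma horizJ_mulVec_pairEquiv_inl (x : Fin (2 * n) → ℝ) (k : Fin n) :
    (horizJ n *ᵥ x) (pairEquiv n (.inl k)) = x (pairEquiv n (.inr k)) := by
  simp [horizJ, submatrix_mulVec_equiv, J, neg_mulVec, fromBlocks_mulVec]

lemma horizJ_mulVec_pairEquiv_inr (x : Fin (2 * n) → ℝ) (k : Fin n) :
    (horizJ n *ᵥ x) (pairEquiv n (.inr k)) = -x (pairEquiv n (.inl k)) := by
  simp [horizJ, submatrix_mulVec_equiv, J, neg_mulVec, fromBlocks_mulVec]

end Symplectic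

lemma Xvec_castSucc (n : ℕ) (ξ : Fin (2 * n + 1) → ℝ) (i j : Fin (2 * n)) :
    Xvec n ξ i j.castSucc = Pi.single (M := fun _ ↦ ℝ) i 1 j := by
  simp [Xvec, Pi.single_apply, Fin.ext_iff, j.isLt.ne]

lemma Xvec_last (n : ℕ) (ξ : Fin (2 * n + 1) → ℝ) (i : Fin (2 * n)) :
    Xvec n ξ i (Fin.last (2 * n)) = 2 * (horizJ n *ᵥ Fin.init ξ) i := by
  obtain ⟨k | k, rfl⟩ := (pairEquiv n).surjective i
  · rw [horizJ_mulVec_pairEquiv_inl]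
    simp [Xvec, pairEquiv, Fin.init, Fin.castSucc, Fin.castAdd, Fin.castLE,
      show 2 * n ≠ k by omega]
  · rw [horizJ_mulVec_pairEquiv_inr]
    simp [Xvec, pairEquiv, Fin.init, Fin.castSucc, Fin.castAdd, Fin.castLE,
      show 2 * n ≠ k + n by omega]

section HorizontalCalculus

/-- The horizontal gradient `∇_{H^n} F = (X_1 F, …, X_{2n} F)`. -/
def horizGrad (n : ℕ) (F : (Fin (2 * n + 1) → ℝ) → ℝ) (ξ : Fin (2 * n + 1) → ℝ) :
    Fin (2 * n) → ℝ :=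
  fun i ↦ X n i F ξ

variable {n : ℕ} {F G : (Fin (2 * n + 1) → ℝ) → ℝ} {ξ : Fin (2 * n + 1) → ℝ} {g : ℝ → ℝ}

lemma X_add (hF : DifferentiableAt ℝ F ξ) (hG : DifferentiableAt ℝ G ξ) (i : Fin (2 * n)) :
    X n i (fun η ↦ F η + G η) ξ = X n i F ξ + X n i G ξ := by
  simp [X, fderiv_fun_add hF hG]

lemma X_mul (hF : DifferentiableAt ℝ F ξ) (hG : DifferentiableAt ℝ G ξ) (i : Fin (2 * n)) :
    X n i (fun η ↦ F η * G η) ξ = F ξ * X n i G ξ + G ξ * X n i F ξ := by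
  simp [X, fderiv_fun_mul hF hG]

lemma X_comp (hg : DifferentiableAt ℝ g (F ξ)) (hF : DifferentiableAt ℝ F ξ) (i : Fin (2 * n)) :
    X n i (fun η ↦ g (F η)) ξ = deriv g (F ξ) * X n i F ξ := by
  have h := (hg.hasDerivAt.comp_hasFDerivAt ξ hF.hasFDerivAt).fderiv
  simp only [Function.comp_def] at h
  simp [X, h]

lemma horizGrad_add (hF : DifferentiableAt ℝ F ξ) (hG : DifferentiableAt ℝ G ξ) :
    horizGrad n (fun η ↦ F η + G η) ξ = horizGrad n F ξ + horizGrad n G ξ :=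
  funext (X_add hF hG)

lemma horizGrad_comp (hg : DifferentiableAt ℝ g (F ξ)) (hF : DifferentiableAt ℝ F ξ) :
    horizGrad n (fun η ↦ g (F η)) ξ = deriv g (F ξ) • horizGrad n F ξ :=
  funext (X_comp hg hF)

lemma horizGrad_pow (hF : DifferentiableAt ℝ F ξ) (m : ℕ) :
    horizGrad n (fun η ↦ F η ^ m) ξ = (m * F ξ ^ (m - 1)) • horizGrad n F ξ := by
  rw [horizGrad_comp (g := (· ^ m)) (by fun_prop) hF, deriv_pow_field]

lemma X_congr (h : F =ᶠ[𝓝 ξ] G) (i : Fin (2 * n)) : X n i F ξ = X n i G ξ := by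
  rw [X, X, h.fderiv_eq]

lemma X_linearMap (L : (Fin (2 * n + 1) → ℝ) →ₗ[ℝ] ℝ) (i : Fin (2 * n)) :
    X n i (fun η ↦ L η) ξ = L (Xvec n ξ i) :=
  congr($(L.toContinuousLinearMap.fderiv (x := ξ)) (Xvec n ξ i))

lemma X_mulVec_init (A : Matrix (Fin (2 * n)) (Fin (2 * n)) ℝ) (i j : Fin (2 * n)) :
    X n i (fun η ↦ (A *ᵥ Fin.init η) j) ξ = A j i := by
  have hinit : Fin.init (Xvec n ξ i) = Pi.single i 1 := funext (Xvec_castSucc n ξ i)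
  have hX := X_linearMap (ξ := ξ)
    (LinearMap.proj j ∘ₗ A.mulVecLin ∘ₗ LinearMap.funLeft ℝ ℝ Fin.castSucc) i
  refine hX.trans ?_
  change (A *ᵥ Fin.init (Xvec n ξ i)) j = A j i
  simp [hinit]

lemma contDiff_Xvec {m : WithTop ℕ∞} (i : Fin (2 * n)) : ContDiff ℝ m fun η ↦ Xvec n η i := by
  unfold Xvec
  refine contDiff_pi.2 fun j ↦ contDiff_const.add ?_
  split_ifs <;> fun_prop

lemma differentiableAt_X (hF : ContDiffAt ℝ 2 F ξ) (i : Fin (2 * n)) :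
    DifferentiableAt ℝ (X n i F) ξ :=
  ((hF.fderiv_right (m := 1) (by norm_num)).clm_apply
    (contDiff_Xvec i).contDiffAt).differentiableAt one_ne_zero

lemma X_X_comp (hg : ContDiffAt ℝ 2 g (F ξ)) (hF : ContDiffAt ℝ 2 F ξ) (i j : Fin (2 * n)) :
    X n i (fun η ↦ X n j (fun ζ ↦ g (F ζ)) η) ξ =
      deriv (deriv g) (F ξ) * (X n i F ξ * X n j F ξ) +
        deriv g (F ξ) * X n i (fun η ↦ X n j F η) ξ := by
  have hg' : DifferentiableAt ℝ (deriv g) (F ξ) :=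
    ((hg.fderiv_right (m := 1) (by norm_num)).clm_apply contDiffAt_const).differentiableAt
      one_ne_zero
  have hXcomp : (fun η ↦ X n j (fun ζ ↦ g (F ζ)) η) =ᶠ[𝓝 ξ]
      fun η ↦ deriv g (F η) * X n j F η := by
    filter_upwards [hF.eventually (by simp), hF.continuousAt.eventually (hg.eventually (by simp))]
      with η hFη hgη
    exact X_comp (hgη.differentiableAt two_ne_zero) (hFη.differentiableAt two_ne_zero) j
  have hFd := hF.differentiableAt two_ne_zero
  rw [X_congr hXcomp, X_mul (F := fun η ↦ deriv g (F η)) (hg'.comp ξ hFd)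
    (differentiableAt_X hF j), X_comp hg' hFd]
  ring

lemma HessH_add (hF : ContDiffAt ℝ 2 F ξ) (hG : ContDiffAt ℝ 2 G ξ) :
    HessH n (fun η ↦ F η + G η) ξ = HessH n F ξ + HessH n G ξ := by
  have hXadd (j : Fin (2 * n)) : (fun η ↦ X n j (fun ζ ↦ F ζ + G ζ) η) =ᶠ[𝓝 ξ]
      fun η ↦ X n j F η + X n j G η := by
    filter_upwards [hF.eventually (by simp), hG.eventually (by simp)] with η hFη hGη
    exact X_add (hFη.differentiableAt two_ne_zero) (hGη.differentiableAt two_ne_zero) j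
  ext i j
  simp only [HessH, of_apply, Matrix.add_apply, X_congr (hXadd _),
    X_add (differentiableAt_X hF _) (differentiableAt_X hG _)]
  ring

lemma HessH_comp (hg : ContDiffAt ℝ 2 g (F ξ)) (hF : ContDiffAt ℝ 2 F ξ) :
    HessH n (fun η ↦ g (F η)) ξ =
      deriv (deriv g) (F ξ) • vecMulVec (horizGrad n F ξ) (horizGrad n F ξ) +
        deriv g (F ξ) • HessH n F ξ := by
  ext i j
  simp only [HessH, of_apply, X_X_comp hg hF, Matrix.add_apply, Matrix.smul_apply,
    vecMulVec_apply, horizGrad, smul_eq_mul]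
  ring

lemma HessH_pow (hF : ContDiffAt ℝ 2 F ξ) (m : ℕ) :
    HessH n (fun η ↦ F η ^ m) ξ =
      (m * (m - 1 : ℕ) * F ξ ^ (m - 2)) • vecMulVec (horizGrad n F ξ) (horizGrad n F ξ) +
        (m * F ξ ^ (m - 1)) • HessH n F ξ := by
  have hderiv : deriv (fun x : ℝ ↦ x ^ m) = fun x ↦ (m : ℝ) * x ^ (m - 1) :=
    funext fun x ↦ deriv_pow_field m
  rw [HessH_comp (g := (· ^ m)) (by fun_prop) hF, hderiv]
  simp [Nat.sub_sub, mul_assoc]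

lemma HessH_of_horizGrad_eq_mulVec {A : Matrix (Fin (2 * n)) (Fin (2 * n)) ℝ}
    (hA : ∀ η, horizGrad n F η = A *ᵥ Fin.init η) :
    HessH n F ξ = (1 / 2 : ℝ) • (A + Aᵀ) := by
  have hX (j : Fin (2 * n)) : (fun η ↦ X n j F η) = fun η ↦ (A *ᵥ Fin.init η) j :=
    funext fun η ↦ congrFun (hA η) j
  ext i j
  simp only [HessH, of_apply, hX, X_mulVec_init, Matrix.smul_apply, Matrix.add_apply,
    transpose_apply, smul_eq_mul]
  ring

end HorizontalCalculus

section Gauge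

variable {n : ℕ} (ξ : Fin (2 * n + 1) → ℝ)

lemma hsq_eq_dotProduct : hsq n ξ = Fin.init ξ ⬝ᵥ Fin.init ξ :=
  sum_congr rfl fun i _ ↦ sq (ξ i.castSucc)

lemma contDiff_hsq {m : WithTop ℕ∞} : ContDiff ℝ m (hsq n) := by
  unfold hsq
  fun_prop

lemma horizGrad_hsq : horizGrad n (hsq n) ξ = (2 : ℝ) • Fin.init ξ := by
  have hderiv : HasFDerivAt (hsq n) (∑ i : Fin (2 * n), (2 * ξ i.castSucc) •
      ContinuousLinearMap.proj (R := ℝ) (φ := fun _ : Fin (2 * n + 1) ↦ ℝ) i.castSucc) ξ :=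
    HasFDerivAt.fun_sum fun i _ ↦
      ((hasFDerivAt_apply (𝕜 := ℝ) i.castSucc ξ).pow 2).congr_fderiv (by simp)
  ext i
  simp [horizGrad, X, hderiv.fderiv, Xvec_castSucc, Pi.single_apply, Fin.init]

lemma horizGrad_last :
    horizGrad n (fun η ↦ η (Fin.last (2 * n))) ξ = (2 : ℝ) • horizJ n *ᵥ Fin.init ξ :=
  funext fun i ↦ (X_linearMap (LinearMap.proj (Fin.last (2 * n))) i).trans (Xvec_last n ξ i)

lemma HessH_hsq : HessH n (hsq n) ξ = (2 : ℝ) • 1 := by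
  rw [HessH_of_horizGrad_eq_mulVec (A := (2 : ℝ) • 1)
    (fun η ↦ by rw [horizGrad_hsq, smul_mulVec, one_mulVec]), transpose_smul, transpose_one]
  module

lemma HessH_last : HessH n (fun η ↦ η (Fin.last (2 * n))) ξ = 0 := by
  rw [HessH_of_horizGrad_eq_mulVec (A := (2 : ℝ) • horizJ n)
    (fun η ↦ by rw [horizGrad_last, smul_mulVec]), transpose_smul, horizJ_transpose, smul_neg,
    add_neg_cancel, smul_zero]

lemma rho_pow_four : rho n ξ ^ 4 = hsq n ξ ^ 2 + ξ (Fin.last (2 * n)) ^ 2 := by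
  rw [rho, ← Real.rpow_mul_natCast (by positivity), Nat.cast_ofNat,
    one_div_mul_cancel four_ne_zero, Real.rpow_one]
  rfl

lemma horizGrad_rho_pow_four :
    horizGrad n (fun η ↦ rho n η ^ 4) ξ =
      (4 : ℝ) • (hsq n ξ • Fin.init ξ + ξ (Fin.last (2 * n)) • horizJ n *ᵥ Fin.init ξ) := by
  have hh : DifferentiableAt ℝ (hsq n) ξ := contDiff_hsq.contDiffAt.differentiableAt one_ne_zero
  simp only [rho_pow_four]
  rw [horizGrad_add (by fun_prop) (by fun_prop),
    horizGrad_pow hh, horizGrad_pow (F := fun η ↦ η (Fin.last (2 * n))) (by fun_prop),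
    horizGrad_hsq, horizGrad_last]
  simp only [Nat.cast_ofNat, Nat.add_one_sub_one, pow_one]
  module

lemma HessH_rho_pow_four :
    HessH n (fun η ↦ rho n η ^ 4) ξ = (4 * hsq n ξ) • 1 +
      (8 : ℝ) • (vecMulVec (Fin.init ξ) (Fin.init ξ) +
        vecMulVec (horizJ n *ᵥ Fin.init ξ) (horizJ n *ᵥ Fin.init ξ)) := by
  have hh : ContDiffAt ℝ 2 (hsq n) ξ := contDiff_hsq.contDiffAt
  simp only [rho_pow_four]
  rw [HessH_add (by fun_prop) (by fun_prop),
    HessH_pow hh, HessH_pow (F := fun η ↦ η (Fin.last (2 * n))) (by fun_prop),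
    horizGrad_hsq, horizGrad_last, HessH_hsq, HessH_last]
  simp only [vecMulVec_smul, smul_vecMulVec, Nat.cast_ofNat, Nat.add_one_sub_one, Nat.sub_self,
    Nat.cast_one, pow_zero, pow_one]
  module

variable {ξ}

lemma contDiffAt_rho (hr : 0 < rho n ξ) {m : WithTop ℕ∞} : ContDiffAt ℝ m (rho n) ξ := by
  have hh : ContDiffAt ℝ m (hsq n) ξ := contDiff_hsq.contDiffAt
  have hbase : hsq n ξ ^ 2 + ξ (Fin.last (2 * n)) ^ 2 ≠ 0 := rho_pow_four ξ ▸ (pow_pos hr 4).ne'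
  exact ContDiffAt.rpow_const_of_ne (by fun_prop) hbase

lemma horizGrad_rho (hr : 0 < rho n ξ) :
    horizGrad n (rho n) ξ = (hsq n ξ / rho n ξ ^ 3) • Fin.init ξ +
      (ξ (Fin.last (2 * n)) / rho n ξ ^ 3) • horizJ n *ᵥ Fin.init ξ := by
  have hchain := horizGrad_pow ((contDiffAt_rho hr).differentiableAt one_ne_zero) 4
  rw [horizGrad_rho_pow_four] at hchain
  linear_combination (norm := skip) (-(4 * rho n ξ ^ 3)⁻¹) • hchain
  match_scalars <;> field_simp <;> norm_num

lemma horizJ_mulVec_horizGrad_rho (hr : 0 < rho n ξ) :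
    horizJ n *ᵥ horizGrad n (rho n) ξ = (hsq n ξ / rho n ξ ^ 3) • horizJ n *ᵥ Fin.init ξ -
      (ξ (Fin.last (2 * n)) / rho n ξ ^ 3) • Fin.init ξ := by
  rw [horizGrad_rho hr, mulVec_add, mulVec_smul, mulVec_smul, horizJ_mulVec_horizJ_mulVec,
    smul_neg, sub_eq_add_neg]

lemma gradSq_eq_dotProduct : gradSq n ξ = horizGrad n (rho n) ξ ⬝ᵥ horizGrad n (rho n) ξ := by
  simp only [gradSq, horizGrad, dotProduct, sq]

lemma gradSq_eq_hsq_div (hr : 0 < rho n ξ) : gradSq n ξ = hsq n ξ / rho n ξ ^ 2 := by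
  have horth := dotProduct_horizJ_mulVec_self n (Fin.init ξ)
  rw [gradSq_eq_dotProduct, horizGrad_rho hr]
  simp only [dotProduct_add, add_dotProduct, dotProduct_smul, smul_dotProduct, horth,
    dotProduct_comm (horizJ n *ᵥ Fin.init ξ) (Fin.init ξ),
    horizJ_mulVec_dotProduct_horizJ_mulVec, ← hsq_eq_dotProduct, smul_eq_mul]
  field_simp
  rw [rho_pow_four]
  ring

lemma sq_smul_vecMulVec_horizGrad_rho_add (hr : 0 < rho n ξ) :
    rho n ξ ^ 2 • (vecMulVec (horizGrad n (rho n) ξ) (horizGrad n (rho n) ξ) +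
      vecMulVec (horizJ n *ᵥ horizGrad n (rho n) ξ) (horizJ n *ᵥ horizGrad n (rho n) ξ)) =
    vecMulVec (Fin.init ξ) (Fin.init ξ) +
      vecMulVec (horizJ n *ᵥ Fin.init ξ) (horizJ n *ᵥ Fin.init ξ) := by
  rw [horizJ_mulVec_horizGrad_rho hr, horizGrad_rho hr, vecMulVec_self_add_vecMulVec_self_rotate,
    smul_smul, div_pow, div_pow, ← add_div, ← rho_pow_four]
  field_simp
  rw [one_smul]

lemma HessH_rho (hr : 0 < rho n ξ) :
    HessH n (rho n) ξ = (rho n ξ)⁻¹ • (gradSq n ξ • 1 -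
      vecMulVec (horizGrad n (rho n) ξ) (horizGrad n (rho n) ξ) + (2 : ℝ) •
      vecMulVec (horizJ n *ᵥ horizGrad n (rho n) ξ) (horizJ n *ᵥ horizGrad n (rho n) ξ)) := by
  have hchain := HessH_pow (contDiffAt_rho hr) 4
  rw [HessH_rho_pow_four, ← sq_smul_vecMulVec_horizGrad_rho_add hr] at hchain
  rw [gradSq_eq_hsq_div hr]
  linear_combination (norm := skip) (-(4 * rho n ξ ^ 3)⁻¹) • hchain
  match_scalars <;> field_simp <;> push_cast [Nat.add_one_sub_one] <;> ring

lemma HessH_comp_rho {f : ℝ → ℝ} (hf : ContDiffAt ℝ 2 f (rho n ξ)) (hr : 0 < rho n ξ) :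
    HessH n (fun η ↦ f (rho n η)) ξ =
      (gradSq n ξ * deriv f (rho n ξ) / rho n ξ) • 1 +
      (deriv (deriv f) (rho n ξ) - deriv f (rho n ξ) / rho n ξ) •
        vecMulVec (horizGrad n (rho n) ξ) (horizGrad n (rho n) ξ) +
      (2 * deriv f (rho n ξ) / rho n ξ) •
        vecMulVec (horizJ n *ᵥ horizGrad n (rho n) ξ) (horizJ n *ᵥ horizGrad n (rho n) ξ) := by
  rw [HessH_comp hf (contDiffAt_rho hr), HessH_rho hr]
  module

end Gauge

theorem heisenberg_radial_hessian_eigenvalues_general {n : ℕ} (hn : n ≠ 0) {f : ℝ → ℝ}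
    {ξ : Fin (2 * n + 1) → ℝ} (hf : ContDiffAt ℝ 2 f (rho n ξ)) (hr : 0 < rho n ξ)
    (hM : (HessH n (fun η ↦ f (rho n η)) ξ).IsHermitian) :
    univ.val.map hM.eigenvalues =
      (gradSq n ξ * deriv (deriv f) (rho n ξ)) ::ₘ
      (3 * gradSq n ξ * deriv f (rho n ξ) / rho n ξ) ::ₘ
      Multiset.replicate (2 * n - 2) (gradSq n ξ * deriv f (rho n ξ) / rho n ξ) := by
  have hcard : 2 ≤ Fintype.card (Fin (2 * n)) := by rw [Fintype.card_fin]; omega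
  calc univ.val.map hM.eigenvalues
      = (HessH n (fun η ↦ f (rho n η)) ξ).charpoly.roots :=
        hM.roots_charpoly_eq_eigenvalues.symm
    _ = _ := by
        rw [HessH_comp_rho hf hr, roots_charpoly_smul_one_add_vecMulVec_add_vecMulVec hcard
          (dotProduct_horizJ_mulVec_self n _), horizJ_mulVec_dotProduct_horizJ_mulVec,
          ← gradSq_eq_dotProduct, Fintype.card_fin]
        congr 2 <;> ring

/-- for a C² radial function `f(ρ)`, at points where `∇_{H^n}ρ ≠ 0` the
eigenvalues (with multiplicity) of the Heisenberg Hessian `D²_{H^n}(f ∘ ρ)` are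
`|∇_{H^n}ρ|² f''(ρ)` (simple), `3|∇_{H^n}ρ|² f'(ρ)/ρ` (simple) and
`|∇_{H^n}ρ|² f'(ρ)/ρ` with multiplicity `2n-2`; at points where `∇_{H^n}ρ = 0`
all eigenvalues vanish. -/
theorem heisenberg_radial_hessian_eigenvalues (n : ℕ) (f : ℝ → ℝ)
    (hf : ContDiffOn ℝ 2 f (Set.Ioi 0)) (ξ : Fin (2*n+1) → ℝ)
    (hr : 0 < rho n ξ)
    (hM : (HessH n (fun η => f (rho n η)) ξ).IsHermitian) :
    ((∃ i : Fin (2*n), X n i (rho n) ξ ≠ 0) →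
      (Finset.univ.val.map hM.eigenvalues :
          Multiset ℝ) =
        (gradSq n ξ * deriv (deriv f) (rho n ξ)) ::ₘ
        (3 * gradSq n ξ * deriv f (rho n ξ) / rho n ξ) ::ₘ
        Multiset.replicate (2*n - 2)
          (gradSq n ξ * deriv f (rho n ξ) / rho n ξ)) ∧
    ((∀ i : Fin (2*n), X n i (rho n) ξ = 0) →
      ∀ i, hM.eigenvalues i = 0) := by
  have general (i : Fin (2 * n)) := heisenberg_radial_hessian_eigenvalues_general
    (by have := i.pos; omega) (hf.contDiffAt (Ioi_mem_nhds hr)) hr hM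
  refine ⟨fun ⟨i, _⟩ ↦ general i, fun hX i ↦ ?_⟩
  have hmem := general i ▸ Multiset.mem_map_of_mem hM.eigenvalues (mem_univ_val i)
  simpa [gradSq, hX, Multiset.mem_replicate, or_iff_left_of_imp And.right] using hmem
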